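/- Let R be an integral domain with fraction field K and let A be a finite flat R-algebra that is finitely presented as an R-module, with A^K ≠ 0, and let (c_i)_{i∈I} be the block idempotents of A^K. For any two distinct indices i, j ∈ I, the gluing locus Γ_A^≤({i,j}) := {p ∈ Spec(R) : c_i and c_j lie in the same block of A_p} is a closed subset of Spec(R). -/

import Mathlib

open TensorProduct

section BlockDefs
variable {B : Type*} [Ring B]

/-- `e` is a centrally-primitive ("block") idempotent of the subring of `B` with carrier `S`:
it is a nonzero idempotent of `S`, central in `S`, and not the sum of two nonzero orthogonal
central idempotents of `S`. -/
def IsBlockIdemOn (S : Set B) (e : B) : Prop :=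
  e ∈ S ∧ IsIdempotentElem e ∧ e ≠ 0 ∧ (∀ x ∈ S, e * x = x * e) ∧
    ∀ f g : B, f ∈ S → g ∈ S → (∀ x ∈ S, f * x = x * f) → (∀ x ∈ S, g * x = x * g) →
      IsIdempotentElem f → IsIdempotentElem g → f * g = 0 → f + g = e → f = 0 ∨ g = 0

/-- `e` is a centrally-primitive ("block") idempotent of the ring `B`. -/
def IsBlockIdem (e : B) : Prop := IsBlockIdemOn Set.univ e

end BlockDefs

/-- The subring `A_p` of `A^K = K ⊗[R] A`: elements of the form `a/s` with `s ∉ p`. -/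
def localizedAt (R : Type*) [CommRing R] [IsDomain R] (A : Type*) [Ring A] [Algebra R A]
    (p : PrimeSpectrum R) : Set (FractionRing R ⊗[R] A) :=
  {x | ∃ (a : A) (s : R), s ∉ p.asIdeal ∧ s • x = Algebra.TensorProduct.includeRight a}

/-- Two elements of `A^K` (typically block idempotents of `A^K`) lie in the same block of the
localization `A_p`, i.e. there is a block idempotent of `A_p` acting as the identity on both. -/
def inSameBlockAt (R : Type*) [CommRing R] [IsDomain R] (A : Type*) [Ring A] [Algebra R A]
    (p : PrimeSpectrum R) (c d : FractionRing R ⊗[R] A) : Prop :=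
  ∃ e, IsBlockIdemOn (localizedAt R A p) e ∧ e * c = c ∧ e * d = d

variable (R : Type*) [CommRing R] [IsDomain R] (A : Type*) [Ring A] [Algebra R A]

/-!
A block idempotent of a ring is an atom among its central idempotents. If the ambient ring is
Noetherian, these satisfy the descending chain condition, so elements (not all zero) lie in a common
block if and only if no central idempotent separates them, i.e. each one kills all of them or fixes
all of them. A central idempotent of `A_p` is just a central idempotent of `A^K` that lies in `A_p`,
and for a fixed `x` in `A^K` the set of `p` with `x ∈ A_p` is open, being a union of basic opens
`D(s)` over the denominators `s` of `x`. So the gluing locus is the intersection, over the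
separating central idempotents `e` of `A^K`, of the closed sets of `p` with `e ∉ A_p`.
-/

section CentralIdempotents
variable {B : Type*} [Ring B] {S : Subring B} {e f : B}

/-- `e` is a central idempotent of the subring `S` of `B`. It is encoded as an element of `B`, like
the block idempotents of `IsBlockIdemOn`, so that idempotents of different subrings can be
compared. -/
structure IsCentralIdemOn (S : Subring B) (e : B) : Prop where
  mem : e ∈ S
  isIdempotentElem : IsIdempotentElem e
  comm : ∀ x ∈ S, e * x = x * e

namespace IsCentralIdemOn

theorem one : IsCentralIdemOn S 1 :=
  ⟨S.one_mem, .one, fun x _ ↦ by rw [one_mul, mul_one]⟩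

theorem mul (he : IsCentralIdemOn S e) (hf : IsCentralIdemOn S f) : IsCentralIdemOn S (e * f) where
  mem := S.mul_mem he.mem hf.mem
  isIdempotentElem := he.isIdempotentElem.mul_of_commute (he.comm f hf.mem) hf.isIdempotentElem
  comm x hx := by rw [mul_assoc, hf.comm x hx, ← mul_assoc, he.comm x hx, mul_assoc]

theorem sub (he : IsCentralIdemOn S e) (hf : IsCentralIdemOn S f) (hfe : f * e = f) :
    IsCentralIdemOn S (e - f) where
  mem := S.sub_mem he.mem hf.mem
  isIdempotentElem := by
    have hef : e * f = f := by rw [he.comm f hf.mem, hfe]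
    rw [IsIdempotentElem, sub_mul, mul_sub, mul_sub, he.isIdempotentElem.eq, hef, hfe,
      hf.isIdempotentElem.eq, sub_self, sub_zero]
  comm x hx := by rw [sub_mul, mul_sub, he.comm x hx, hf.comm x hx]

end IsCentralIdemOn

theorem isBlockIdemOn_iff_atom :
    IsBlockIdemOn (S : Set B) e ↔ IsCentralIdemOn S e ∧ e ≠ 0 ∧
      ∀ f, IsCentralIdemOn S f → f * e = f → f = 0 ∨ f = e := by
  constructor
  · rintro ⟨mem, idem, ne_zero, comm, primitive⟩
    have he : IsCentralIdemOn S e := ⟨mem, idem, comm⟩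
    refine ⟨he, ne_zero, fun f hf hfe ↦ ?_⟩
    have hg : IsCentralIdemOn S (e - f) := he.sub hf hfe
    have orthogonal : f * (e - f) = 0 := by rw [mul_sub, hfe, hf.isIdempotentElem.eq, sub_self]
    exact (primitive f (e - f) hf.mem hg.mem hf.comm hg.comm hf.isIdempotentElem
      hg.isIdempotentElem orthogonal (add_sub_cancel f e)).imp_right fun h ↦ (sub_eq_zero.1 h).symm
  · rintro ⟨he, ne_zero, atom⟩
    refine ⟨he.mem, he.isIdempotentElem, ne_zero, he.comm, ?_⟩
    rintro f g hfS - hfc - hf - hfg rfl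
    have hfe : f * (f + g) = f := by rw [mul_add, hf.eq, hfg, add_zero]
    exact (atom f ⟨hfS, hf, hfc⟩ hfe).imp_right left_eq_add.1

theorem IsBlockIdemOn.mul_eq_zero_or_mul_eq (he : IsBlockIdemOn (S : Set B) e)
    (hf : IsCentralIdemOn S f) : f * e = 0 ∨ f * e = e := by
  obtain ⟨he, -, atom⟩ := isBlockIdemOn_iff_atom.1 he
  exact atom (f * e) (hf.mul he) (by rw [mul_assoc, he.isIdempotentElem.eq])

-- Descending chains of commuting idempotents `e` give ascending chains of left ideals `B (1 - e)`.
theorem exists_minimal_idempotent [IsNoetherianRing B] {E : Set B} (hE : E.Nonempty)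
    (idem : ∀ e ∈ E, IsIdempotentElem e) :
    ∃ e ∈ E, ∀ f ∈ E, e * f = f → f * e = f → f = e := by
  let annihilator (e : B) : Ideal B := Ideal.span {1 - e}
  obtain ⟨e, heE, maximal⟩ := (InvImage.wf annihilator wellFounded_gt).has_min E hE
  refine ⟨e, heE, fun f hfE hef hfe ↦ ?_⟩
  have le : annihilator e ≤ annihilator f := by
    rw [Ideal.span_singleton_le_iff_mem, Ideal.mem_span_singleton']
    exact ⟨1 - e, by rw [mul_one_sub, sub_mul, one_mul, hef, sub_self, sub_zero]⟩
  have mem : 1 - f ∈ annihilator e := by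
    rw [le.eq_of_not_lt (maximal f hfE)]
    exact Ideal.mem_span_singleton_self _
  obtain ⟨b, hb⟩ := Ideal.mem_span_singleton'.1 mem
  have fixed : (1 - f) * (1 - e) = 1 - f := by
    rw [← hb, mul_assoc, (idem e heE).one_sub.eq]
  have absorbed : (1 - f) * (1 - e) = 1 - e := by
    rw [mul_one_sub, sub_mul, one_mul, hfe, sub_sub_sub_cancel_right]
  exact sub_right_injective (fixed.symm.trans absorbed)

theorem exists_isBlockIdemOn_forall_mul_eq_iff [IsNoetherianRing B] {X : Set B}
    (hX : ∃ x ∈ X, x ≠ 0) :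
    (∃ e, IsBlockIdemOn (S : Set B) e ∧ ∀ x ∈ X, e * x = x) ↔
      ∀ f, IsCentralIdemOn S f → (∀ x ∈ X, f * x = 0) ∨ ∀ x ∈ X, f * x = x := by
  constructor
  · rintro ⟨e, he, heX⟩ f hf
    have mul_eq (x : B) (hx : x ∈ X) : f * x = f * e * x := by rw [mul_assoc, heX x hx]
    refine (he.mul_eq_zero_or_mul_eq hf).imp (fun h x hx ↦ ?_) (fun h x hx ↦ ?_)
    · rw [mul_eq x hx, h, zero_mul]
    · rw [mul_eq x hx, h, heX x hx]
  · intro unseparated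
    obtain ⟨e, ⟨he, heX⟩, minimal⟩ := exists_minimal_idempotent
      (E := {e | IsCentralIdemOn S e ∧ ∀ x ∈ X, e * x = x})
      ⟨1, .one, fun x _ ↦ one_mul x⟩ (fun _ h ↦ h.1.isIdempotentElem)
    have eq_of_fixes (f : B) (hf : IsCentralIdemOn S f) (hfX : ∀ x ∈ X, f * x = x)
        (hfe : f * e = f) : f = e :=
      minimal f ⟨hf, hfX⟩ (by rw [he.comm f hf.mem, hfe]) hfe
    refine ⟨e, isBlockIdemOn_iff_atom.2 ⟨he, ?_, fun f hf hfe ↦ ?_⟩, heX⟩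
    · rintro rfl
      obtain ⟨x, hx, hx0⟩ := hX
      exact hx0 (by rw [← heX x hx, zero_mul])
    · refine (unseparated f hf).imp (fun hfX ↦ ?_) (fun hfX ↦ eq_of_fixes f hf hfX hfe)
      refine sub_eq_self.1 (eq_of_fixes (e - f) (he.sub hf hfe) (fun x hx ↦ ?_) ?_)
      · rw [sub_mul, heX x hx, hfX x hx, sub_zero]
      · rw [sub_mul, he.isIdempotentElem.eq, hfe]

end CentralIdempotents

theorem commute_of_forall_commute_includeRight {R K A : Type*} [CommRing R] [CommRing K]
    [Algebra R K] [Ring A] [Algebra R A] {e : K ⊗[R] A}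
    (he : ∀ a : A, Commute e (Algebra.TensorProduct.includeRight a)) (x : K ⊗[R] A) :
    Commute e x := by
  induction x using TensorProduct.induction_on with
  | zero => exact Commute.zero_right e
  | add x y hx hy => exact hx.add_right hy
  | tmul k a =>
    have smul_eq : k ⊗ₜ[R] a = k • Algebra.TensorProduct.includeRight a := by
      simp [TensorProduct.smul_tmul']
    exact smul_eq ▸ (he a).smul_right k

section Localization
variable {R A}

theorem isOpen_setOf_mem_localizedAt (x : FractionRing R ⊗[R] A) :
    IsOpen {p : PrimeSpectrum R | x ∈ localizedAt R A p} := by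
  refine isOpen_iff_forall_mem_open.2 fun p ⟨a, s, hs, hsx⟩ ↦ ?_
  exact ⟨PrimeSpectrum.basicOpen s, fun q hq ↦ ⟨a, s, hq, hsx⟩,
    (PrimeSpectrum.basicOpen s).isOpen, hs⟩

theorem includeRight_mem_localizedAt (p : PrimeSpectrum R) (a : A) :
    Algebra.TensorProduct.includeRight a ∈ localizedAt R A p :=
  ⟨a, 1, p.asIdeal.one_notMem, one_smul R _⟩

variable (A) in
/-- The set `localizedAt R A p` as a subring of `A^K`. -/
def localizedSubring (p : PrimeSpectrum R) : Subring (FractionRing R ⊗[R] A) where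
  carrier := localizedAt R A p
  one_mem' := by simpa only [map_one] using includeRight_mem_localizedAt p (1 : A)
  zero_mem' := by simpa only [map_zero] using includeRight_mem_localizedAt p (0 : A)
  mul_mem' := by
    rintro x y ⟨a, s, hs, hsx⟩ ⟨b, t, ht, hty⟩
    exact ⟨a * b, s * t, p.asIdeal.primeCompl.mul_mem hs ht,
      by rw [map_mul, ← hsx, ← hty, smul_mul_smul_comm]⟩
  add_mem' := by
    rintro x y ⟨a, s, hs, hsx⟩ ⟨b, t, ht, hty⟩
    refine ⟨t • a + s • b, s * t, p.asIdeal.primeCompl.mul_mem hs ht, ?_⟩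
    rw [map_add, map_smul, map_smul, ← hsx, ← hty, smul_add, smul_smul, smul_smul, mul_comm t s]
  neg_mem' := by
    rintro x ⟨a, s, hs, hsx⟩
    exact ⟨-a, s, hs, by rw [smul_neg, hsx, map_neg]⟩

theorem isCentralIdemOn_localizedSubring_iff {p : PrimeSpectrum R} {e : FractionRing R ⊗[R] A} :
    IsCentralIdemOn (localizedSubring A p) e ↔ IsCentralIdemOn ⊤ e ∧ e ∈ localizedAt R A p where
  mp he := ⟨⟨Subring.mem_top e, he.isIdempotentElem, fun x _ ↦
    commute_of_forall_commute_includeRight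
      (fun a ↦ he.comm _ (includeRight_mem_localizedAt p a)) x⟩, he.mem⟩
  mpr h := ⟨h.2, h.1.isIdempotentElem, fun x _ ↦ h.1.comm x (Subring.mem_top x)⟩

theorem inSameBlockAt_iff_unseparated [IsNoetherianRing (FractionRing R ⊗[R] A)]
    {p : PrimeSpectrum R} {c d : FractionRing R ⊗[R] A} (hc : c ≠ 0) :
    inSameBlockAt R A p c d ↔ ∀ e, IsCentralIdemOn ⊤ e → e ∈ localizedAt R A p →
      (e * c = 0 ∧ e * d = 0) ∨ (e * c = c ∧ e * d = d) := by
  have criterion := exists_isBlockIdemOn_forall_mul_eq_iff (S := localizedSubring A p)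
    (X := {c, d}) ⟨c, Set.mem_insert c {d}, hc⟩
  simp only [Set.forall_mem_insert, Set.mem_singleton_iff, forall_eq,
    isCentralIdemOn_localizedSubring_iff, and_imp] at criterion
  exact criterion

end Localization

theorem stmt3_general [IsNoetherianRing (FractionRing R ⊗[R] A)]
    (c d : FractionRing R ⊗[R] A) (hc : c ≠ 0) :
    IsClosed {p : PrimeSpectrum R | inSameBlockAt R A p c d} := by
  simp only [inSameBlockAt_iff_unseparated hc, Set.ofPred_forall]
  refine isClosed_iInter fun e ↦ isClosed_iInter fun _ ↦ ?_
  exact isClosed_imp (isOpen_setOf_mem_localizedAt e) isClosed_const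

/-- **Closedness of gluing loci.** For two distinct block idempotents `c, d` of the generic fiber
`A^K`, the locus of primes `p` where `c` and `d` lie in the same block of `A_p` is closed. -/
theorem stmt3 [Module.Finite R A] [Module.Flat R A] [Module.FinitePresentation R A]
    [Nontrivial (FractionRing R ⊗[R] A)]
    (c d : FractionRing R ⊗[R] A) (hc : IsBlockIdem c) (hd : IsBlockIdem d) (hcd : c ≠ d) :
    IsClosed {p : PrimeSpectrum R | inSameBlockAt R A p c d} := by
  have : IsNoetherianRing (FractionRing R ⊗[R] A) := .of_finite (FractionRing R) _
  exact stmt3_general R A c d hc.2.2.1
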